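/- Let |p|<1, n ≥ 2, and let a_1,…,a_n, b_1,…,b_{n-2} ∈ ℂ* with a_j a_k, a_j/a_k ∉ {p^m : m ∈ ℤ} for all j ≠ k. Then ∑_{k=1}^n a_k · [∏_{j=1}^{n-2} θ(a_k b_j;p)θ(a_k/b_j;p)] / [∏_{j≠k} θ(a_k a_j;p)θ(a_k/a_j;p)] = 0. -/

import Mathlib

noncomputable def qPochhammerInf (z q : ℂ) : ℂ := ∏' j : ℕ, (1 - z * q ^ j)

noncomputable def theta (z p : ℂ) : ℂ :=
  ∏' j : ℕ, (1 - z * p ^ j) * (1 - p ^ (j + 1) * z⁻¹)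

noncomputable def ellGamma (z p q : ℂ) : ℂ :=
  ∏' jk : ℕ × ℕ,
    (1 - z⁻¹ * p ^ (jk.1 + 1) * q ^ (jk.2 + 1)) / (1 - z * p ^ jk.1 * q ^ jk.2)

section

open Filter Topology Finset

/-- The finite product `(p; p)_n`. -/
noncomputable def qFactorial (p : ℂ) (n : ℕ) : ℂ := ∏ i ∈ range n, (1 - p ^ (i + 1))

/-- The reciprocal of `(p; p)_m`, extended by zero to negative `m`. -/
noncomputable def qFactorialInv (p : ℂ) (m : ℤ) : ℂ :=
  if m < 0 then 0 else (qFactorial p m.toNat)⁻¹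

/-- The integer `k (k - 1) / 2`. -/
def triangular (k : ℤ) : ℤ := k * (k - 1) / 2

lemma two_mul_triangular (k : ℤ) : 2 * triangular k = k * (k - 1) :=
  Int.mul_ediv_cancel' (Int.even_mul_pred_self k).two_dvd

lemma triangular_add_one (k : ℤ) : triangular (k + 1) = triangular k + k := by
  have h₁ := two_mul_triangular k
  have h₂ := two_mul_triangular (k + 1)
  linarith

lemma triangular_add_triangular_sub (t r : ℤ) :
    triangular (t + r) + triangular (t - r) = t * (t - 1) + r * r := by
  have h₁ := two_mul_triangular (t + r)
  have h₂ := two_mul_triangular (t - r)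
  linarith

lemma triangular_add_add_one_add_triangular_sub (t r : ℤ) :
    triangular (t + r + 1) + triangular (t - r) = t * t + r * (r + 1) := by
  have h₁ := two_mul_triangular (t + r + 1)
  have h₂ := two_mul_triangular (t - r)
  linarith

lemma one_sub_pow_succ_ne_zero {p : ℂ} (hp : ‖p‖ < 1) (i : ℕ) : 1 - p ^ (i + 1) ≠ 0 := by
  intro h
  have h₁ : ‖p‖ ^ (i + 1) = 1 := by rw [← norm_pow, ← sub_eq_zero.mp h, norm_one]
  exact absurd h₁ (pow_lt_one₀ (norm_nonneg p) hp i.succ_ne_zero).ne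

lemma qFactorial_ne_zero {p : ℂ} (hp : ‖p‖ < 1) (n : ℕ) : qFactorial p n ≠ 0 :=
  prod_ne_zero_iff.mpr fun i _ => one_sub_pow_succ_ne_zero hp i

lemma qFactorialInv_natCast (p : ℂ) (n : ℕ) : qFactorialInv p n = (qFactorial p n)⁻¹ := by
  simp [qFactorialInv]

lemma qFactorialInv_of_neg (p : ℂ) {m : ℤ} (hm : m < 0) : qFactorialInv p m = 0 := by
  simp [qFactorialInv, hm]

lemma qFactorialInv_eq {p : ℂ} (hp : ‖p‖ < 1) (m : ℤ) :
    qFactorialInv p m = (1 - p ^ (m + 1)) * qFactorialInv p (m + 1) := by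
  rcases lt_trichotomy m (-1) with h | rfl | h
  · rw [qFactorialInv_of_neg p (by omega), qFactorialInv_of_neg p (by omega), mul_zero]
  · simp [qFactorialInv]
  · lift m to ℕ using by omega
    have h₁ : ((m : ℤ) + 1) = ((m + 1 : ℕ) : ℤ) := by push_cast; ring
    rw [h₁, qFactorialInv_natCast, qFactorialInv_natCast, zpow_natCast, qFactorial, qFactorial,
      prod_range_succ, mul_inv, mul_comm, mul_assoc,
      inv_mul_cancel₀ (one_sub_pow_succ_ne_zero hp m), mul_one]

lemma multipliable_one_sub_pow_succ {p : ℂ} (hp : ‖p‖ < 1) :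
    Multipliable fun i : ℕ => 1 - p ^ (i + 1) := by
  simpa [sub_eq_add_neg] using! multipliable_one_add_of_summable (f := fun n : ℕ => -p ^ (n + 1))
    (by simpa using (summable_nat_add_iff 1).mpr (summable_geometric_of_lt_one (norm_nonneg _) hp))

lemma tprod_one_sub_pow_succ_ne_zero {p : ℂ} (hp : ‖p‖ < 1) :
    ∏' i : ℕ, (1 - p ^ (i + 1)) ≠ 0 := by
  refine tprod_one_add_ne_zero_of_summable (f := fun n : ℕ => -p ^ (n + 1)) (fun i => ?_) ?_
  · simpa [sub_eq_add_neg] using! one_sub_pow_succ_ne_zero hp i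
  · simpa using (summable_nat_add_iff 1).mpr (summable_geometric_of_lt_one (norm_nonneg _) hp)

lemma tendsto_qFactorial {p : ℂ} (hp : ‖p‖ < 1) :
    Tendsto (qFactorial p) atTop (𝓝 (∏' i : ℕ, (1 - p ^ (i + 1)))) :=
  (multipliable_one_sub_pow_succ hp).tendsto_prod_tprod_nat

lemma tendsto_qFactorialInv {p : ℂ} (hp : ‖p‖ < 1) :
    Tendsto (qFactorialInv p) atTop (𝓝 (∏' i : ℕ, (1 - p ^ (i + 1)))⁻¹) := by
  have h := ((tendsto_qFactorial hp).inv₀ (tprod_one_sub_pow_succ_ne_zero hp)).comp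
    (show Tendsto Int.toNat atTop atTop from
      tendsto_atTop_atTop.mpr fun b => ⟨b, fun a ha => by omega⟩)
  refine h.congr' ?_
  filter_upwards [eventually_ge_atTop 0] with m hm
  simp [qFactorialInv, hm.not_gt]

lemma exists_norm_qFactorial_le {p : ℂ} (hp : ‖p‖ < 1) : ∃ C, ∀ n, ‖qFactorial p n‖ ≤ C := by
  obtain ⟨C, hC⟩ := (tendsto_qFactorial hp).norm.bddAbove_range
  exact ⟨C, fun n => hC ⟨n, rfl⟩⟩

lemma exists_norm_qFactorialInv_le {p : ℂ} (hp : ‖p‖ < 1) :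
    ∃ C, ∀ m, ‖qFactorialInv p m‖ ≤ C := by
  obtain ⟨C, hC⟩ := ((tendsto_qFactorial hp).inv₀
    (tprod_one_sub_pow_succ_ne_zero hp)).norm.bddAbove_range
  have h : ∀ n : ℕ, ‖qFactorialInv p n‖ ≤ C := fun n => by
    rw [qFactorialInv_natCast]; exact hC ⟨n, rfl⟩
  refine ⟨C, fun m => ?_⟩
  rcases lt_or_ge m 0 with hm | hm
  · rw [qFactorialInv_of_neg p hm, norm_zero]
    exact (norm_nonneg _).trans (h 0)
  · lift m to ℕ using hm
    exact h m

/-- The coefficients of the finite form of the Jacobi triple product. -/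
noncomputable def thetaCoeff (p : ℂ) (N : ℕ) (k : ℤ) : ℂ :=
  (-1) ^ k * p ^ triangular k *
    (qFactorial p (2 * N) * qFactorialInv p (N + k) * qFactorialInv p (N - k))

lemma thetaCoeff_succ {p : ℂ} (hp : ‖p‖ < 1) (hp0 : p ≠ 0) (N : ℕ) (k : ℤ) :
    thetaCoeff p (N + 1) k = (1 + p ^ (2 * N + 1)) * thetaCoeff p N k
      - p ^ N * thetaCoeff p N (k - 1) - p ^ (N + 1) * thetaCoeff p N (k + 1) := by
  have hK : p ^ k ≠ 0 := zpow_ne_zero k hp0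
  have ht₁ : p ^ triangular (k + 1) = p ^ triangular k * p ^ k := by
    rw [triangular_add_one, zpow_add₀ hp0]
  have ht₂ : p ^ triangular (k - 1) = p ^ triangular k * p / p ^ k := by
    have h := triangular_add_one (k - 1)
    rw [sub_add_cancel] at h
    rw [h, zpow_add₀ hp0, zpow_sub_one₀ hp0]
    field_simp
  have hs₁ : (-1 : ℂ) ^ (k + 1) = -(-1) ^ k := by
    rw [zpow_add_one₀ (by norm_num)]; ring
  have hs₂ : (-1 : ℂ) ^ (k - 1) = -(-1) ^ k := by
    rw [zpow_sub_one₀ (by norm_num)]; norm_num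
  have hA₁ : qFactorialInv p (N + k) =
      (1 - p ^ N * p * p ^ k) * qFactorialInv p (N + 1 + k) := by
    rw [qFactorialInv_eq hp, zpow_add_one₀ hp0, zpow_add₀ hp0, zpow_natCast]
    ring_nf
  have hA₂ : qFactorialInv p (N + (k - 1)) =
      (1 - p ^ N * p ^ k) * qFactorialInv p (N + k) := by
    rw [qFactorialInv_eq hp, show (N : ℤ) + (k - 1) + 1 = N + k by ring, zpow_add₀ hp0,
      zpow_natCast]
  have hB₁ : qFactorialInv p (N - k) =
      (1 - p ^ N * p / p ^ k) * qFactorialInv p (N + 1 - k) := by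
    rw [qFactorialInv_eq hp, zpow_add_one₀ hp0, zpow_sub₀ hp0, zpow_natCast]
    ring_nf
  have hB₂ : qFactorialInv p (N - (k + 1)) =
      (1 - p ^ N / p ^ k) * qFactorialInv p (N - k) := by
    rw [qFactorialInv_eq hp, show (N : ℤ) - (k + 1) + 1 = N - k by ring, zpow_sub₀ hp0,
      zpow_natCast]
  have hP : qFactorial p (2 * (N + 1)) =
      qFactorial p (2 * N) * (1 - (p ^ N) ^ 2 * p) * (1 - (p ^ N) ^ 2 * p ^ 2) := by
    rw [show 2 * (N + 1) = 2 * N + 1 + 1 by ring, qFactorial, prod_range_succ, prod_range_succ,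
      qFactorial]
    ring
  unfold thetaCoeff
  rw [ht₁, ht₂, hs₁, hs₂, hA₂, hB₂, hA₁, hB₁, hP, show (N : ℤ) + (k + 1) = N + 1 + k by ring,
    show (N : ℤ) - (k - 1) = N + 1 - k by ring, pow_succ p (2 * N),
    pow_succ p N, pow_mul']
  push_cast
  field_simp
  ring

lemma hasSum_thetaCoeff {p : ℂ} (hp : ‖p‖ < 1) (hp0 : p ≠ 0) {z : ℂ} (hz : z ≠ 0) (N : ℕ) :
    HasSum (fun k : ℤ => thetaCoeff p N k * z ^ k)
      (∏ j ∈ range N, (1 - z * p ^ j) * (1 - p ^ (j + 1) * z⁻¹)) := by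
  induction N with
  | zero =>
    have h : thetaCoeff p 0 0 * z ^ (0 : ℤ) = 1 := by
      simp [thetaCoeff, qFactorialInv, qFactorial, triangular]
    rw [prod_range_zero, ← h]
    refine hasSum_single 0 fun k hk => ?_
    rcases hk.lt_or_gt with h | h
    · simp [thetaCoeff, qFactorialInv_of_neg p h]
    · simp [thetaCoeff, qFactorialInv_of_neg p (neg_lt_zero.mpr h)]
  | succ N ih =>
    have h₁ := (Equiv.subRight (1 : ℤ)).hasSum_iff.mpr ih
    have h₂ := (Equiv.addRight (1 : ℤ)).hasSum_iff.mpr ih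
    have h := ((ih.mul_left (1 + p ^ (2 * N + 1))).sub (h₁.mul_left (z * p ^ N))).sub
      (h₂.mul_left (p ^ (N + 1) * z⁻¹))
    have hprod : ∀ x : ℂ, x * ((1 - z * p ^ N) * (1 - p ^ (N + 1) * z⁻¹)) =
        (1 + p ^ (2 * N + 1)) * x - z * p ^ N * x - p ^ (N + 1) * z⁻¹ * x := fun x => by
      field_simp
      ring
    rw [prod_range_succ, hprod]
    refine h.congr_fun fun k => ?_
    simp only [Function.comp_apply, Equiv.coe_addRight, Equiv.subRight_apply]
    rw [thetaCoeff_succ hp hp0, zpow_add_one₀ hz, zpow_sub_one₀ hz]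
    field_simp

lemma summable_zpow_triangular_nat {p : ℂ} (hp : ‖p‖ < 1) (hp0 : p ≠ 0) {z : ℂ} (hz : z ≠ 0) :
    Summable fun n : ℕ => p ^ triangular n * z ^ n := by
  have hne : ∀ n : ℕ, p ^ triangular n * z ^ n ≠ 0 := fun n =>
    mul_ne_zero (zpow_ne_zero _ hp0) (pow_ne_zero _ hz)
  refine summable_of_ratio_test_tendsto_lt_one zero_lt_one (.of_forall hne) ?_
  have h : Tendsto (fun n : ℕ => ‖p‖ ^ n * ‖z‖) atTop (𝓝 (0 * ‖z‖)) :=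
    (tendsto_pow_atTop_nhds_zero_of_lt_one (norm_nonneg p) hp).mul_const _
  rw [zero_mul] at h
  refine h.congr fun n => ?_
  rw [← norm_div, ← norm_pow, ← norm_mul]
  congr 1
  rw [eq_div_iff (hne n)]
  push_cast
  rw [triangular_add_one, zpow_add₀ hp0, zpow_natCast]
  ring

lemma summable_zpow_triangular {p : ℂ} (hp : ‖p‖ < 1) (hp0 : p ≠ 0) {z : ℂ} (hz : z ≠ 0) :
    Summable fun k : ℤ => p ^ triangular k * z ^ k := by
  refine Summable.of_nat_of_neg (by simpa using summable_zpow_triangular_nat hp hp0 hz) ?_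
  have h := ((summable_nat_add_iff 1).mpr
    (summable_zpow_triangular_nat hp hp0 (inv_ne_zero hz))).mul_right z
  refine h.congr fun n => ?_
  have h₁ : triangular ((n + 1 : ℕ) : ℤ) = triangular (-n) := by
    have h₁ := two_mul_triangular ((n + 1 : ℕ) : ℤ)
    have h₂ := two_mul_triangular (-n)
    push_cast at h₁ ⊢
    linarith
  rw [h₁, zpow_neg, zpow_natCast, pow_succ, inv_pow]
  field_simp

lemma multipliable_one_sub_mul_pow {p : ℂ} (hp : ‖p‖ < 1) (z : ℂ) :
    Multipliable fun j : ℕ => 1 - z * p ^ j := by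
  simpa [sub_eq_add_neg] using! multipliable_one_add_of_summable (f := fun n : ℕ => -(z * p ^ n))
    (by simpa using (summable_geometric_of_lt_one (norm_nonneg _) hp).mul_left ‖z‖)

lemma multipliable_one_sub_pow_succ_mul {p : ℂ} (hp : ‖p‖ < 1) (z : ℂ) :
    Multipliable fun j : ℕ => 1 - p ^ (j + 1) * z := by
  refine (multipliable_one_sub_mul_pow hp (z * p)).congr fun j => ?_
  ring

lemma theta_eq_tprod_mul_tprod {p : ℂ} (hp : ‖p‖ < 1) (z : ℂ) :
    theta z p = (∏' j : ℕ, (1 - z * p ^ j)) * ∏' j : ℕ, (1 - p ^ (j + 1) * z⁻¹) :=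
  (multipliable_one_sub_mul_pow hp z).tprod_mul (multipliable_one_sub_pow_succ_mul hp z⁻¹)

/-- The Jacobi triple product identity. -/
lemma tsum_triangular_eq_theta {p : ℂ} (hp : ‖p‖ < 1) (hp0 : p ≠ 0) {z : ℂ} (hz : z ≠ 0) :
    ∑' k : ℤ, (-1) ^ k * p ^ triangular k * z ^ k =
      (∏' i : ℕ, (1 - p ^ (i + 1))) * theta z p := by
  set P := ∏' i : ℕ, (1 - p ^ (i + 1))
  have hP0 : P ≠ 0 := tprod_one_sub_pow_succ_ne_zero hp
  obtain ⟨C, hC⟩ := exists_norm_qFactorial_le hp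
  obtain ⟨D, hD⟩ := exists_norm_qFactorialInv_le hp
  have hC0 : 0 ≤ C := (norm_nonneg _).trans (hC 0)
  have hD0 : 0 ≤ D := (norm_nonneg _).trans (hD 0)
  have hlim : Tendsto (fun N => ∑' k : ℤ, thetaCoeff p N k * z ^ k) atTop
      (𝓝 (∑' k : ℤ, (-1) ^ k * p ^ triangular k * (P * P⁻¹ * P⁻¹) * z ^ k)) := by
    refine tendsto_tsum_of_dominated_convergence
      ((summable_zpow_triangular hp hp0 hz).norm.mul_left (C * D * D)) (fun k => ?_)
      (.of_forall fun N k => ?_)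
    · have h₁ : Tendsto (fun N : ℕ => 2 * N) atTop atTop :=
        tendsto_id.const_mul_atTop' two_pos
      have h₂ : Tendsto (fun N : ℕ => (N : ℤ) + k) atTop atTop :=
        tendsto_atTop_add_const_right _ _ tendsto_natCast_atTop_atTop
      have h₃ : Tendsto (fun N : ℕ => (N : ℤ) - k) atTop atTop :=
        tendsto_atTop_add_const_right _ _ tendsto_natCast_atTop_atTop
      exact (((((tendsto_qFactorial hp).comp h₁).mul ((tendsto_qFactorialInv hp).comp h₂)).mul
        ((tendsto_qFactorialInv hp).comp h₃)).const_mul _).mul_const _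
    · have h : ‖thetaCoeff p N k * z ^ k‖ = ‖qFactorial p (2 * N)‖ * ‖qFactorialInv p (N + k)‖ *
          ‖qFactorialInv p (N - k)‖ * ‖p ^ triangular k * z ^ k‖ := by
        simp only [thetaCoeff, norm_mul, norm_zpow, norm_neg, norm_one, one_zpow]
        ring
      rw [h]
      gcongr
      · exact hC _
      · exact hD _
      · exact hD _
  have hlim' : Tendsto (fun N => ∑' k : ℤ, thetaCoeff p N k * z ^ k) atTop (𝓝 (theta z p)) := by
    simp only [fun N => (hasSum_thetaCoeff hp hp0 hz N).tsum_eq]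
    exact ((multipliable_one_sub_mul_pow hp z).mul
      (multipliable_one_sub_pow_succ_mul hp z⁻¹)).tendsto_prod_tprod_nat
  rw [← tendsto_nhds_unique hlim hlim', ← tsum_mul_left]
  refine tsum_congr fun k => ?_
  field_simp

lemma theta_zero_right (z : ℂ) : theta z 0 = 1 - z := by
  rw [theta, tprod_eq_mulSingle 0]
  · simp
  · intro j hj
    simp [hj]

lemma theta_ne_zero {p : ℂ} (hp : ‖p‖ < 1) {z : ℂ} (hz : z ≠ 0) (h : ∀ m : ℤ, z ≠ p ^ m) :
    theta z p ≠ 0 := by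
  have hs := summable_geometric_of_lt_one (norm_nonneg _) hp
  rw [theta_eq_tprod_mul_tprod hp]
  refine mul_ne_zero
    (tprod_one_add_ne_zero_of_summable (f := fun j : ℕ => -(z * p ^ j)) (fun j hj => ?_) ?_)
    (tprod_one_add_ne_zero_of_summable (f := fun j : ℕ => -(p ^ (j + 1) * z⁻¹)) (fun j hj => ?_) ?_)
  · refine h (-j) ?_
    rw [zpow_neg, zpow_natCast]
    exact eq_inv_of_mul_eq_one_left (by linear_combination -hj)
  · simpa using hs.mul_left ‖z‖
  · refine h (j + 1 : ℕ) ?_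
    rw [zpow_natCast]
    field_simp at hj
    linear_combination hj
  · simpa using ((summable_nat_add_iff 1).mpr hs).mul_right ‖z‖⁻¹

/-- Splitting a sum over pairs of integers according to the parity of the sum of the pair. -/
lemma hasSum_int_prod_of_even_of_odd {f : ℤ × ℤ → ℂ} {c d : ℂ}
    (hc : HasSum (fun y : ℤ × ℤ => f (y.1 + y.2, y.1 - y.2)) c)
    (hd : HasSum (fun y : ℤ × ℤ => f (y.1 + y.2 + 1, y.1 - y.2)) d) : HasSum f (c + d) := by
  have he : Function.Injective fun y : ℤ × ℤ => (y.1 + y.2, y.1 - y.2) := by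
    rintro ⟨s, t⟩ ⟨s', t'⟩ h
    simp only [Prod.mk.injEq] at h ⊢
    omega
  have ho : Function.Injective fun y : ℤ × ℤ => (y.1 + y.2 + 1, y.1 - y.2) := by
    rintro ⟨s, t⟩ ⟨s', t'⟩ h
    simp only [Prod.mk.injEq] at h ⊢
    omega
  refine (he.hasSum_range_iff.mpr hc).add_isCompl ⟨?_, ?_⟩ (ho.hasSum_range_iff.mpr hd)
  · rw [Set.disjoint_left]
    rintro _ ⟨⟨s, t⟩, rfl⟩ ⟨⟨s', t'⟩, h⟩
    simp only [Prod.mk.injEq] at h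
    omega
  · rw [codisjoint_iff_le_sup]
    rintro ⟨m, n⟩ -
    rcases Int.even_or_odd' (m + n) with ⟨t, h | h⟩
    · exact Or.inl ⟨(t, m - t), by simp only [Prod.mk.injEq]; omega⟩
    · exact Or.inr ⟨(t, m - t - 1), by simp only [Prod.mk.injEq]; omega⟩

/-- The general term of the series expansion of the theta function. -/
noncomputable def thetaTerm (p z : ℂ) (k : ℤ) : ℂ := (-1) ^ k * p ^ triangular k * z ^ k

lemma thetaTerm_mul_thetaTerm_even {p x b : ℂ} (hp0 : p ≠ 0) (hx : x ≠ 0) (hb : b ≠ 0)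
    (t r : ℤ) : thetaTerm p (x * b) (t + r) * thetaTerm p (x / b) (t - r) =
      (p ^ (t * (t - 1)) * x ^ (2 * t)) * (p ^ (r * r) * b ^ (2 * r)) := by
  have h₁ : p ^ (t * (t - 1)) * p ^ (r * r) = p ^ triangular (t + r) * p ^ triangular (t - r) := by
    rw [← zpow_add₀ hp0, ← zpow_add₀ hp0, triangular_add_triangular_sub]
  have h₂ : (-1 : ℂ) ^ (t + r) * (-1) ^ (t - r) = 1 := by
    rw [← zpow_add₀ (by norm_num)]
    exact Even.neg_one_zpow ⟨t, by ring⟩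
  have h₃ : (x * b) ^ (t + r) * (x / b) ^ (t - r) = x ^ (2 * t) * b ^ (2 * r) := by
    rw [mul_zpow, div_zpow, two_mul, two_mul, zpow_add₀ hx, zpow_add₀ hb, zpow_sub₀ hx,
      zpow_sub₀ hb, zpow_add₀ hx, zpow_add₀ hb]
    field_simp
  unfold thetaTerm
  calc _ = ((-1 : ℂ) ^ (t + r) * (-1) ^ (t - r)) *
        (p ^ triangular (t + r) * p ^ triangular (t - r)) *
        ((x * b) ^ (t + r) * (x / b) ^ (t - r)) := by ring
    _ = _ := by rw [h₂, h₃, ← h₁]; ring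

lemma thetaTerm_mul_thetaTerm_odd {p x b : ℂ} (hp0 : p ≠ 0) (hx : x ≠ 0) (hb : b ≠ 0)
    (t r : ℤ) : thetaTerm p (x * b) (t + r + 1) * thetaTerm p (x / b) (t - r) =
      -(x * b) * ((p ^ (t * t) * x ^ (2 * t)) * (p ^ (r * (r + 1)) * b ^ (2 * r))) := by
  have h₁ : p ^ (t * t) * p ^ (r * (r + 1)) =
      p ^ triangular (t + r + 1) * p ^ triangular (t - r) := by
    rw [← zpow_add₀ hp0, ← zpow_add₀ hp0, triangular_add_add_one_add_triangular_sub]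
  have h₂ : (-1 : ℂ) ^ (t + r + 1) * (-1) ^ (t - r) = -1 := by
    rw [← zpow_add₀ (by norm_num)]
    exact Odd.neg_one_zpow ⟨t, by ring⟩
  have h₃ : (x * b) ^ (t + r + 1) * (x / b) ^ (t - r) =
      (x * b) * (x ^ (2 * t) * b ^ (2 * r)) := by
    rw [zpow_add_one₀ (mul_ne_zero hx hb), mul_zpow, div_zpow, two_mul, two_mul, zpow_add₀ hx,
      zpow_add₀ hb, zpow_sub₀ hx, zpow_sub₀ hb, zpow_add₀ hx, zpow_add₀ hb]
    field_simp
  unfold thetaTerm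
  calc _ = ((-1 : ℂ) ^ (t + r + 1) * (-1) ^ (t - r)) *
        (p ^ triangular (t + r + 1) * p ^ triangular (t - r)) *
        ((x * b) ^ (t + r + 1) * (x / b) ^ (t - r)) := by ring
    _ = _ := by rw [h₂, h₃, ← h₁]; ring

lemma summable_norm_zpow_mul_zpow {p : ℂ} (hp : ‖p‖ < 1) (hp0 : p ≠ 0) {z : ℂ} (hz : z ≠ 0) :
    Summable fun t : ℤ => ‖p ^ (t * (t - 1)) * z ^ t‖ := by
  have hp2 : ‖p ^ 2‖ < 1 := by
    rw [norm_pow]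
    exact pow_lt_one₀ (norm_nonneg p) hp two_ne_zero
  refine (summable_zpow_triangular hp2 (pow_ne_zero 2 hp0) hz).norm.congr fun t => ?_
  rw [← two_mul_triangular, zpow_mul]
  norm_cast

lemma theta_mul_theta_eq_tsum {p : ℂ} (hp : ‖p‖ < 1) (hp0 : p ≠ 0) {x b : ℂ}
    (hx : x ≠ 0) (hb : b ≠ 0) :
    (∏' i : ℕ, (1 - p ^ (i + 1))) ^ 2 * (theta (x * b) p * theta (x / b) p) =
      (∑' t : ℤ, p ^ (t * (t - 1)) * x ^ (2 * t)) * (∑' r : ℤ, p ^ (r * r) * b ^ (2 * r)) -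
      x / b * ((∑' t : ℤ, p ^ (t * t) * x ^ (2 * t)) *
        ∑' r : ℤ, p ^ (r * (r - 1)) * b ^ (2 * r)) := by
  have hxb : x * b ≠ 0 := mul_ne_zero hx hb
  have hxb' : x / b ≠ 0 := div_ne_zero hx hb
  have hsum : ∀ z : ℂ, z ≠ 0 → Summable fun k : ℤ => ‖thetaTerm p z k‖ := fun z hz => by
    refine (summable_zpow_triangular hp hp0 hz).norm.congr fun k => ?_
    rw [thetaTerm, mul_assoc, norm_mul ((-1) ^ k), norm_zpow, norm_neg, norm_one, one_zpow, one_mul]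
  have hE : ∀ z : ℂ, z ≠ 0 → Summable fun t : ℤ => ‖p ^ (t * (t - 1)) * z ^ (2 * t)‖ :=
    fun z hz => by
      refine (summable_norm_zpow_mul_zpow hp hp0 (pow_ne_zero 2 hz)).congr fun t => ?_
      rw [zpow_mul z]
      norm_cast
  have hF : ∀ z : ℂ, z ≠ 0 → Summable fun t : ℤ => ‖p ^ (t * t) * z ^ (2 * t)‖ :=
    fun z hz => by
      refine (summable_norm_zpow_mul_zpow hp hp0 (mul_ne_zero hp0 (pow_ne_zero 2 hz))).congr
        fun t => ?_
      rw [mul_zpow, ← mul_assoc, ← zpow_add₀ hp0, zpow_mul z, mul_sub_one, sub_add_cancel]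
      norm_cast
  have hshift : ∀ r : ℤ, p ^ ((r + 1) * (r + 1 - 1)) * b ^ (2 * (r + 1)) =
      b ^ 2 * (p ^ (r * (r + 1)) * b ^ (2 * r)) := fun r => by
    rw [mul_add, zpow_add₀ hb, add_sub_cancel_right, mul_comm (r + 1)]
    norm_cast
    ring
  have hG : Summable fun r : ℤ => ‖p ^ (r * (r + 1)) * b ^ (2 * r)‖ := by
    refine (((Equiv.addRight (1 : ℤ)).summable_iff.mpr (hE b hb)).mul_left ‖(b ^ 2)⁻¹‖).congr
      fun r => ?_
    rw [Function.comp_apply, Equiv.coe_addRight, hshift, ← norm_mul,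
      inv_mul_cancel_left₀ (pow_ne_zero 2 hb)]
  have hGE : ∑' r : ℤ, p ^ (r * (r - 1)) * b ^ (2 * r) =
      b ^ 2 * ∑' r : ℤ, p ^ (r * (r + 1)) * b ^ (2 * r) := by
    rw [← tsum_mul_left, ← (Equiv.addRight (1 : ℤ)).tsum_eq]
    exact tsum_congr hshift
  have heven := (summable_mul_of_summable_norm (hE x hx) (hF b hb)).hasSum
  have hodd := (summable_mul_of_summable_norm (hF x hx) hG).hasSum.mul_left (-(x * b))
  rw [← tsum_mul_tsum_of_summable_norm (hE x hx) (hF b hb)] at heven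
  rw [← tsum_mul_tsum_of_summable_norm (hF x hx) hG] at hodd
  have htotal : HasSum (fun y : ℤ × ℤ => thetaTerm p (x * b) y.1 * thetaTerm p (x / b) y.2) _ :=
    hasSum_int_prod_of_even_of_odd
      (heven.congr_fun fun y => thetaTerm_mul_thetaTerm_even hp0 hx hb y.1 y.2)
      (hodd.congr_fun fun y => thetaTerm_mul_thetaTerm_odd hp0 hx hb y.1 y.2)
  have h := htotal.tsum_eq
  rw [← tsum_mul_tsum_of_summable_norm (hsum _ hxb) (hsum _ hxb')] at h
  simp only [thetaTerm] at h
  rw [tsum_triangular_eq_theta hp hp0 hxb, tsum_triangular_eq_theta hp hp0 hxb'] at h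
  rw [hGE]
  have hb' : x / b * b ^ 2 = x * b := by field_simp
  linear_combination h + ((∑' t : ℤ, p ^ (t * t) * x ^ (2 * t)) *
    ∑' r : ℤ, p ^ (r * (r + 1)) * b ^ (2 * r)) * hb'

/-- As functions of `x`, the products `θ(x b) θ(x / b) / x` span a space of dimension at most
two. -/
lemma exists_theta_mul_theta_eq {p : ℂ} (hp : ‖p‖ < 1) :
    ∃ u v : ℂ → ℂ, ∀ x b : ℂ, x ≠ 0 → b ≠ 0 →
      theta (x * b) p * theta (x / b) p = x * (u x * v b - v x * u b) := by
  rcases eq_or_ne p 0 with rfl | hp0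
  · refine ⟨fun x => x + x⁻¹, fun _ => 1, fun x b hx hb => ?_⟩
    rw [theta_zero_right, theta_zero_right]
    field_simp
    ring
  have hP := pow_ne_zero 2 (tprod_one_sub_pow_succ_ne_zero hp)
  refine ⟨fun x => (∑' t : ℤ, p ^ (t * (t - 1)) * x ^ (2 * t)) / x /
    (∏' i : ℕ, (1 - p ^ (i + 1))) ^ 2, fun x => ∑' t : ℤ, p ^ (t * t) * x ^ (2 * t),
    fun x b hx hb => ?_⟩
  rw [← mul_right_inj' hP, theta_mul_theta_eq_tsum hp hp0 hx hb]
  generalize (∏' i : ℕ, (1 - p ^ (i + 1))) ^ 2 = P at hP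
  field_simp

/-- Homogeneous form of the vanishing of the top coefficient in Lagrange interpolation. -/
lemma sum_prod_det_div_prod_det_eq_zero {K ι κ : Type*} [Field K] [Infinite K] [Fintype ι]
    [DecidableEq ι] [Fintype κ] (hcard : Fintype.card ι = Fintype.card κ + 2)
    (u v : ι → K) (α β : κ → K) (hdet : ∀ i j, i ≠ j → u i * v j - v i * u j ≠ 0) :
    ∑ k, (∏ j, (u k * β j - v k * α j)) / ∏ j ∈ univ.erase k, (u k * v j - v k * u j) = 0 := by
  classical
  have hne : ∀ i, u i = 0 → v i ≠ 0 := fun i hu hv => by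
    have : Nontrivial ι := Fintype.one_lt_card_iff_nontrivial.mp (by omega)
    obtain ⟨j, hj⟩ := exists_ne i
    exact hdet i j hj.symm (by simp [hu, hv])
  obtain ⟨c, hc⟩ := Infinite.exists_notMem_finset (univ.image fun i => -(v i / u i))
  have hw : ∀ i, v i + c * u i ≠ 0 := fun i h => by
    by_cases hu : u i = 0
    · exact hne i hu (by simpa [hu] using h)
    · refine hc (mem_image.mpr ⟨i, mem_univ i, ?_⟩)
      field_simp
      linear_combination -h
  set w : ι → K := fun i => v i + c * u i
  set y : ι → K := fun i => u i / w i
  have hwv : ∀ i, w i = v i + c * u i := fun _ => rfl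
  have hyw : ∀ i, y i * w i = u i := fun i => div_mul_cancel₀ _ (hw i)
  have hdet' : ∀ i j, u i * v j - v i * u j = w i * w j * (y i - y j) := fun i j => by
    linear_combination u j * hwv i - u i * hwv j - w j * hyw i + w i * hyw j
  have hy : Function.Injective y := fun i j hij => by
    by_contra h
    exact hdet i j h (by rw [hdet', hij, sub_self, mul_zero])
  set Q : Polynomial K := ∏ j, (Polynomial.C (β j + c * α j) * Polynomial.X - Polynomial.C (α j))
    with hQ
  have hdeg : Q.natDegree ≤ Fintype.card κ := by
    refine (Polynomial.natDegree_prod_le _ _).trans ?_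
    refine (sum_le_card_nsmul univ _ 1 fun j _ => ?_).trans (by simp)
    compute_degree
  have heval : ∀ k, ∏ j, (u k * β j - v k * α j) = w k ^ Fintype.card κ * Q.eval (y k) := fun k => by
    rw [hQ, Polynomial.eval_prod, ← card_univ, ← prod_const, ← prod_mul_distrib]
    refine prod_congr rfl fun j _ => ?_
    simp only [Polynomial.eval_sub, Polynomial.eval_mul, Polynomial.eval_C, Polynomial.eval_X]
    linear_combination α j * hwv k - (β j + c * α j) * hyw k
  have hden : ∀ k, ∏ j ∈ univ.erase k, (u k * v j - v k * u j) =
      w k ^ Fintype.card κ * (∏ j, w j) * ∏ j ∈ univ.erase k, (y k - y j) := fun k => by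
    simp only [hdet', prod_mul_distrib, prod_const]
    rw [card_erase_of_mem (mem_univ k), card_univ, hcard, ← mul_prod_erase univ w (mem_univ k),
      show Fintype.card κ + 2 - 1 = Fintype.card κ + 1 by omega]
    ring
  have hcoeff := Lagrange.coeff_eq_sum (s := univ) (hy.injOn) (P := Q) (by
    rw [card_univ, hcard]
    refine (Polynomial.natDegree_le_iff_degree_le.mp hdeg).trans_lt ?_
    exact_mod_cast Nat.lt_add_of_pos_right two_pos)
  rw [card_univ, hcard, Polynomial.coeff_eq_zero_of_natDegree_lt (by omega)] at hcoeff
  calc _ = ∑ k, (∏ j, w j)⁻¹ * (Q.eval (y k) / ∏ j ∈ univ.erase k, (y k - y j)) := by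
        refine sum_congr rfl fun k _ => ?_
        have hk : w k ^ Fintype.card κ ≠ 0 := pow_ne_zero _ (hw k)
        rw [heval, hden, mul_assoc, mul_div_mul_left _ _ hk, div_mul_eq_div_div_swap, div_eq_inv_mul]
    _ = 0 := by rw [← mul_sum, ← hcoeff, mul_zero]

end

theorem theta_partial_fraction_sum_BC (p : ℂ) (hp : ‖p‖ < 1) (n : ℕ) (hn : 2 ≤ n)
    (a : Fin n → ℂ) (b : Fin (n - 2) → ℂ) (ha : ∀ j, a j ≠ 0) (hb : ∀ j, b j ≠ 0)
    (hdist : ∀ j k, j ≠ k → ∀ m : ℤ, a j * a k ≠ p ^ m ∧ a j / a k ≠ p ^ m) :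
    ∑ k, a k * (∏ j, theta (a k * b j) p * theta (a k / b j) p) /
        ∏ j ∈ Finset.univ.erase k, theta (a k * a j) p * theta (a k / a j) p
      = 0 := by
  obtain ⟨u, v, huv⟩ := exists_theta_mul_theta_eq hp
  have hdet : ∀ i j, i ≠ j → u (a i) * v (a j) - v (a i) * u (a j) ≠ 0 := fun i j hij h => by
    have h₁ : theta (a i * a j) p * theta (a i / a j) p ≠ 0 := mul_ne_zero
      (theta_ne_zero hp (mul_ne_zero (ha i) (ha j)) fun m => (hdist i j hij m).1)
      (theta_ne_zero hp (div_ne_zero (ha i) (ha j)) fun m => (hdist i j hij m).2)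
    exact h₁ (by rw [huv _ _ (ha i) (ha j), h, mul_zero])
  rw [← sum_prod_det_div_prod_det_eq_zero (by simp only [Fintype.card_fin]; omega)
    (fun i => u (a i)) (fun i => v (a i)) (fun j => u (b j)) (fun j => v (b j)) hdet]
  refine Finset.sum_congr rfl fun k _ => ?_
  simp only [huv _ _ (ha _) (ha _), huv _ _ (ha _) (hb _), Finset.prod_mul_distrib,
    Finset.prod_const]
  rw [Finset.card_erase_of_mem (Finset.mem_univ k), Finset.card_univ, Finset.card_univ,
    Fintype.card_fin, Fintype.card_fin, ← mul_assoc, ← pow_succ',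
    show n - 2 + 1 = n - 1 by omega, mul_div_mul_left _ _ (pow_ne_zero _ (ha k))]
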